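/- arXiv:math/0703695 — 3 statements merged into one kernel-verified Lean document; each statement's English description precedes it below -/
import Mathlib

section
/- Assume μ_i ≥ i − 1 for all i = 1,…,n. Then the ideals I_{λ−μ} and Ī_{λ−μ} have the same number of minimal generators; namely, the smallest cardinality of a generating set of the specialized ideal Ī_{λ−μ} of S equals |λ| − |μ| = (λ_1 − μ_1) + (λ_2 − μ_2) + ⋯ + (λ_n − μ_n). -/
open MvPolynomial

/-!
The monomials `X_i X_j` all have degree two, so they form an antichain for divisibility. For an
ideal `I` generated by an antichain of monomials `X^t`, `t ∈ T`, taking the coefficients at the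
exponents in `T` is semilinear on `I` along the constant coefficient: multiplying by a
nonconstant monomial pushes every exponent of an element of `I` out of `T`. It maps `I` onto a
free module of rank `#T`, so `I` cannot be generated by fewer than `#T` elements.

It remains to count the distinct monomials of the specialized ideal. Counting from zero, each cell
`(i, j)` satisfies `i ≤ μ_i ≤ j`. Hence the unordered pair `{i, j}` determines the cell, and no two
cells give the same monomial.
-/

section SpanRank

variable {R M : Type*} [Semiring R] [AddCommMonoid M] [Module R M]

theorem sInf_card_finset_span_eq_spanFinrank (p : Submodule R M) :
    sInf {k : ℕ | ∃ s : Finset M, s.card = k ∧ Submodule.span R (s : Set M) = p} =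
      p.spanFinrank := by
  rw [Submodule.spanFinrank_eq_iInf, iInf]
  congr 1
  ext k
  simp [and_comm]

end SpanRank

section MonomialIdeal

variable {σ R : Type*} [CommSemiring R] {T : Set (σ →₀ ℕ)}

theorem coeff_mul_of_mem_span_monomial (hT : IsAntichain (· ≤ ·) T) {t : σ →₀ ℕ} (ht : t ∈ T)
    {q : MvPolynomial σ R} (hq : q ∈ Ideal.span ((monomial · (1 : R)) '' T))
    (r : MvPolynomial σ R) : coeff t (r * q) = constantCoeff r * coeff t q := by
  classical
  rw [coeff_mul, constantCoeff_eq]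
  refine Finset.sum_eq_single (0, t) (fun ⟨a, b⟩ hab hne ↦ ?_) (by simp)
  suffices hb : b ∉ q.support by simp [notMem_support_iff.1 hb]
  intro hb
  have hsum : a + b = t := Finset.HasAntidiagonal.mem_antidiagonal.1 hab
  obtain ⟨t', ht', hle⟩ := mem_ideal_span_monomial_image.1 hq b hb
  have hbt : b ≤ t := hsum ▸ le_add_self
  have htb : b = t := hbt.antisymm (hT.eq ht' ht (hle.trans hbt) ▸ hle)
  exact hne (Prod.ext (by simpa [htb] using hsum) htb)

instance ringHomSurjective_constantCoeff :
    RingHomSurjective (constantCoeff : MvPolynomial σ R →+* R) :=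
  ⟨fun a ↦ ⟨C a, constantCoeff_C σ a⟩⟩

/-- The coefficients at the exponents in an antichain `T`, as a map on the ideal generated by the
monomials with exponents in `T`. It is semilinear along `constantCoeff`, hence bounds the number
of generators of this ideal from below by the rank of its target. -/
noncomputable def coeffsOnAntichain (hT : IsAntichain (· ≤ ·) T) :
    Ideal.span ((monomial · (1 : R)) '' T) →ₛₗ[(constantCoeff : MvPolynomial σ R →+* R)]
      (T →₀ R) where
  toFun q := Finsupp.subtypeDomain (· ∈ T) (AddMonoidAlgebra.coeff q.1)
  map_add' p q := Finsupp.ext fun t ↦ coeff_add t.1 p.1 q.1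
  map_smul' r q := Finsupp.ext fun t ↦ coeff_mul_of_mem_span_monomial hT t.2 q.2 r

theorem coeffsOnAntichain_apply (hT : IsAntichain (· ≤ ·) T)
    (q : Ideal.span ((monomial · (1 : R)) '' T)) (t : T) :
    coeffsOnAntichain hT q t = coeff t.1 q.1 :=
  rfl

theorem coeffsOnAntichain_surjective (hT : IsAntichain (· ≤ ·) T) :
    Function.Surjective (coeffsOnAntichain (R := R) hT) := by
  rw [← LinearMap.range_eq_top, eq_top_iff, ← Finsupp.basisSingleOne.span_eq, Submodule.span_le]
  rintro _ ⟨t, rfl⟩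
  refine ⟨⟨monomial t 1, Ideal.subset_span ⟨t, t.2, rfl⟩⟩, Finsupp.ext fun u ↦ ?_⟩
  classical
  simp [coeffsOnAntichain_apply, Finsupp.single_apply, coeff_monomial, Subtype.ext_iff]

theorem spanRank_span_monomial_of_isAntichain [Nontrivial R] (hT : IsAntichain (· ≤ ·) T) :
    (Ideal.span ((monomial · (1 : R)) '' T)).spanRank =
      Cardinal.mk ((monomial · (1 : R)) '' T) := by
  let b : Module.Basis T R (T →₀ R) := Finsupp.basisSingleOne
  refine (Submodule.spanRank_span_le_card _).antisymm ?_
  calc Cardinal.mk ((monomial · (1 : R)) '' T)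
      = Cardinal.mk (Set.range b) := Cardinal.mk_congr <|
        (Equiv.Set.image _ T (monomial_left_injective one_ne_zero)).symm.trans
          (Equiv.ofInjective b b.injective)
    _ = (LinearMap.range (coeffsOnAntichain (R := R) hT)).spanRank := by
        rw [b.mk_eq_spanRank, LinearMap.range_eq_top.2 (coeffsOnAntichain_surjective hT)]
    _ ≤ (⊤ : Submodule (MvPolynomial σ R)
          (Ideal.span ((monomial · (1 : R)) '' T))).spanRank := Submodule.spanRank_range_le _
    _ = _ := Submodule.spanRank_top _

theorem spanFinrank_span_monomial_of_isAntichain [Nontrivial R] (hT : IsAntichain (· ≤ ·) T) :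
    (Ideal.span ((monomial · (1 : R)) '' T)).spanFinrank = T.ncard := by
  rw [Submodule.spanFinrank, spanRank_span_monomial_of_isAntichain hT,
    ← Set.ncard_image_of_injective T (monomial_left_injective (R := R) one_ne_zero)]
  rfl

end MonomialIdeal

theorem isAntichain_of_degree_eq {σ : Type*} {T : Set (σ →₀ ℕ)} {d : ℕ}
    (hT : ∀ t ∈ T, t.degree = d) : IsAntichain (· ≤ ·) T := by
  intro a ha b hb hne hle
  obtain ⟨c, rfl⟩ := exists_add_of_le hle
  have hc : c.degree = 0 := by simpa [hT a ha] using hT _ hb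
  exact hne (by simp [(Finsupp.degree_eq_zero_iff c).1 hc])

section EdgeIdeal

variable {σ : Type*}

/-- The exponent of the quadratic monomial `X_i X_j` attached to the unordered pair `{i, j}`. -/
noncomputable def edgeExponent (e : Sym2 σ) : σ →₀ ℕ :=
  (e.map (Finsupp.single · 1)).add

theorem edgeExponent_injective : Function.Injective (edgeExponent (σ := σ)) := by
  rintro ⟨a, b⟩ ⟨c, d⟩ h
  have h' : Finsupp.single a 1 + Finsupp.single b 1 =
    (Finsupp.single c 1 + Finsupp.single d 1 : σ →₀ ℕ) := h
  rw [Finsupp.single_add_single_eq_single_add_single one_ne_zero one_ne_zero] at h'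
  exact Sym2.eq_iff.2 (by simpa using h')

theorem degree_edgeExponent (e : Sym2 σ) : (edgeExponent e).degree = 2 := by
  induction e with
  | h a b => simp [edgeExponent]

/-- The edge ideal of a graph with edge set `E`, generated by the monomials `X_i X_j` with
`{i, j} ∈ E`. Loops are allowed, and contribute the squares `X_i ^ 2`. -/
noncomputable def edgeIdeal (R : Type*) [CommSemiring R] (E : Set (Sym2 σ)) :
    Ideal (MvPolynomial σ R) :=
  Ideal.span ((fun e ↦ (e.map X).mul) '' E)

variable (R : Type*) [CommSemiring R]

theorem mul_map_X_eq_monomial (e : Sym2 σ) :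
    (e.map X).mul = monomial (edgeExponent e) (1 : R) := by
  induction e with
  | h a b => simp [edgeExponent, X, monomial_mul]

theorem edgeIdeal_eq_span_monomial (E : Set (Sym2 σ)) :
    edgeIdeal R E = Ideal.span ((monomial · (1 : R)) '' (edgeExponent '' E)) := by
  simp only [edgeIdeal, mul_map_X_eq_monomial, Set.image_image]

theorem spanFinrank_edgeIdeal [Nontrivial R] (E : Set (Sym2 σ)) :
    (edgeIdeal R E).spanFinrank = E.ncard := by
  have hanti : IsAntichain (· ≤ ·) (edgeExponent '' E) :=
    isAntichain_of_degree_eq (Set.forall_mem_image.2 fun e _ ↦ degree_edgeExponent e)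
  rw [edgeIdeal_eq_span_monomial, spanFinrank_span_monomial_of_isAntichain hanti,
    Set.ncard_image_of_injective E edgeExponent_injective]

end EdgeIdeal

section Ferrers

theorem injOn_sym2Mk_of_le (α : Type*) [PartialOrder α] :
    Set.InjOn (fun p : α × α ↦ s(p.1, p.2)) {p | p.1 ≤ p.2} := by
  rintro ⟨a, b⟩ hab ⟨c, d⟩ hcd h
  rcases Sym2.eq_iff.1 h with ⟨rfl, rfl⟩ | ⟨rfl, rfl⟩
  · rfl
  · exact Prod.ext (le_antisymm hab hcd) (le_antisymm hcd hab)

variable {n m : ℕ}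

/-- The cells of the skew diagram `λ - μ`, indexed from zero, with row `i` occupying the columns
`μ_i ≤ j < λ_i`; the column index is bounded by `m`. -/
def skewCells (m : ℕ) (lam mu : Fin n → ℕ) : Finset (Fin n × Fin m) :=
  {c | mu c.1 ≤ c.2 ∧ c.2 < lam c.1}

theorem card_skewCells {lam mu : Fin n → ℕ} (hlam : ∀ i, lam i ≤ m) :
    (skewCells m lam mu).card = ∑ i, (Finset.Ico (mu i) (lam i)).card := by
  rw [skewCells, Finset.card_filter, Fintype.sum_prod_type]
  refine Finset.sum_congr rfl fun i _ ↦ ?_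
  rw [← Finset.card_filter, ← Finset.card_attachFin (n := m) (Finset.Ico (mu i) (lam i)) fun j hj ↦
    (Finset.mem_Ico.1 hj).2.trans_le (hlam i)]
  congr 1
  ext j
  simp

/-- The edges `{i, j}` of the graph obtained from the Ferrers graph of `λ - μ` by identifying
the `i`-th row vertex with the `i`-th column vertex. -/
def specializedFerrersEdges (hnm : n ≤ m) (lam mu : Fin n → ℕ) : Set (Sym2 (Fin m)) :=
  (fun c : Fin n × Fin m ↦ s(Fin.castLE hnm c.1, c.2)) '' (skewCells m lam mu)

theorem ncard_specializedFerrersEdges (hnm : n ≤ m) {lam mu : Fin n → ℕ}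
    (hmu : ∀ i : Fin n, (i : ℕ) ≤ mu i) :
    (specializedFerrersEdges hnm lam mu).ncard = (skewCells m lam mu).card := by
  have hinj : Set.InjOn (fun c : Fin n × Fin m ↦ s(Fin.castLE hnm c.1, c.2))
      (skewCells m lam mu) := by
    refine (injOn_sym2Mk_of_le (Fin m)).comp (f := Prod.map (Fin.castLE hnm) id)
      ((Fin.castLE_injective hnm).prodMap Function.injective_id).injOn fun c hc ↦ ?_
    have hc : mu c.1 ≤ c.2 ∧ (c.2 : ℕ) < lam c.1 := by simpa [skewCells] using hc
    exact Fin.le_def.2 ((hmu c.1).trans hc.1)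
  rw [specializedFerrersEdges, hinj.ncard_image, Set.ncard_coe_finset]

theorem edgeIdeal_specializedFerrersEdges (R : Type*) [CommSemiring R] (hnm : n ≤ m)
    (lam mu : Fin n → ℕ) :
    edgeIdeal R (specializedFerrersEdges hnm lam mu) =
      Ideal.span {p : MvPolynomial (Fin m) R | ∃ (i : Fin n) (j : Fin m),
        mu i ≤ j.val ∧ j.val < lam i ∧ p = X (Fin.castLE hnm i) * X j} := by
  rw [edgeIdeal, specializedFerrersEdges, Set.image_image]
  congr 1
  ext p
  simp [skewCells, and_assoc, eq_comm]

end Ferrers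

theorem specialized_ferrers_min_generators_general
    {R : Type*} [CommSemiring R] [Nontrivial R] {n m : ℕ} (hnm : n ≤ m) {lam mu : Fin n → ℕ}
    (hlam : ∀ i, lam i ≤ m) (hmu : ∀ i : Fin n, i.val ≤ mu i) :
    sInf {k : ℕ | ∃ s : Finset (MvPolynomial (Fin m) R),
        s.card = k ∧
        Ideal.span (s : Set (MvPolynomial (Fin m) R)) =
          Ideal.span {p : MvPolynomial (Fin m) R |
            ∃ (i : Fin n) (j : Fin m), mu i ≤ j.val ∧ j.val < lam i ∧
              p = X (Fin.castLE hnm i) * X j}} =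
      ∑ i : Fin n, (Finset.Ico (mu i) (lam i)).card := by
  rw [← edgeIdeal_specializedFerrersEdges R hnm lam mu, ← card_skewCells hlam,
    ← ncard_specializedFerrersEdges hnm hmu, ← spanFinrank_edgeIdeal R]
  exact sInf_card_finset_span_eq_spanFinrank _

/-- Assume `μ_i ≥ i − 1` for all `i`. Then the specialized ideal
`Ī_{λ−μ} ⊆ S = K[x_1,…,x_m]` has the same number of minimal generators as
`I_{λ−μ}`: the smallest cardinality of a generating set of `Ī_{λ−μ}` equals
`|λ| − |μ| = ∑ (λ_i − μ_i)`.
Indices: `i : Fin n` corresponds to the 1-based index `i.val + 1`, and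
`j : Fin m` to `j.val + 1`. -/
theorem specialized_ferrers_min_generators
    (K : Type*) [Field K] (n m : ℕ) (hn : 1 ≤ n) (hnm : n ≤ m)
    (lam mu : Fin n → ℕ)
    (hlam_top : lam ⟨0, hn⟩ = m)
    (hlam_anti : Antitone lam)
    (hlam_pos : 1 ≤ lam ⟨n - 1, by omega⟩)
    (hmu_mono : Monotone mu)
    (hmu_lt : mu ⟨n - 1, by omega⟩ < lam ⟨n - 1, by omega⟩)
    (hmu_ge : ∀ i : Fin n, i.val ≤ mu i) :
    sInf {k : ℕ | ∃ s : Finset (MvPolynomial (Fin m) K),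
        s.card = k ∧
        Ideal.span (s : Set (MvPolynomial (Fin m) K)) =
          Ideal.span {p : MvPolynomial (Fin m) K |
            ∃ (i : Fin n) (j : Fin m), mu i ≤ j.val ∧ j.val < lam i ∧
              p = X (Fin.castLE hnm i) * X j}} =
      ∑ i : Fin n, (lam i - mu i) := by
  have hlam (i : Fin n) : lam i ≤ m := hlam_top ▸ hlam_anti (Fin.mk_le_of_le_val (Nat.zero_le _))
  simpa only [Nat.card_Ico] using specialized_ferrers_min_generators_general hnm hlam hmu_ge
end

section
/- There exists a permutation π of {1,…,m} such that the K-algebra automorphism of R that fixes each variable x_i and sends y_j to y_{π(j)} maps the generalized Ferrers ideal I_{λ−μ} onto the Ferrers ideal I_{λ'}, where λ' := (λ_1 − μ_1, λ_2 − μ_2, …, λ_n − μ_n) (which is a partition, since λ is nonincreasing and μ is nondecreasing) and I_{λ'} is the ideal of R generated by the monomials x_i·y_j with 1 ≤ i ≤ n and 1 ≤ j ≤ λ_i − μ_i. -/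
/-!
Because `λ` decreases and `μ` increases, the neighbourhoods `{j | μ_i < j ≤ λ_i}` of the `x_i` form
a chain of subsets of `{1,…,m}`. List the points of `{1,…,m}` by increasing number of members of the
chain that miss them: a point of a member `t` is missed by strictly fewer members than a point
outside `t`, so every `t` becomes an initial segment of the list, and an initial segment is
determined by its size, which for the `i`-th neighbourhood is `λ_i - μ_i`.
-/

open MvPolynomial

section Chain

/-- The number of members of a family `c` of sets that miss the point `j`. Sorting by it straightens
a finite chain into initial segments; the value is `0` when infinitely many members miss `j`. -/
noncomputable def missCount {κ : Type*} (c : Set (Set κ)) (j : κ) : ℕ :=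
  {t ∈ c | j ∉ t}.ncard

theorem missCount_lt_missCount_of_isChain {κ : Type*} {c : Set (Set κ)} (hfin : c.Finite)
    (hc : IsChain (· ⊆ ·) c) {t : Set κ} (ht : t ∈ c) {j k : κ} (hj : j ∈ t) (hk : k ∉ t) :
    missCount c j < missCount c k := by
  refine Set.ncard_lt_ncard ?_ (hfin.subset (Set.sep_subset _ _))
  have hsub : {s ∈ c | j ∉ s} ⊆ {s ∈ c | k ∉ s} := by
    rintro s ⟨hs, hjs⟩
    have hst : s ⊆ t := (hc.total hs ht).resolve_right fun hts => hjs (hts hj)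
    exact ⟨hs, fun hks => hk (hst hks)⟩
  exact hsub.ssubset_of_mem_notMem ⟨ht, hk⟩ fun htj => htj.2 hj

variable {m : ℕ}

theorem exists_perm_forall_isLowerSet_image_of_isChain {c : Set (Set (Fin m))}
    (hc : IsChain (· ⊆ ·) c) : ∃ π : Equiv.Perm (Fin m), ∀ t ∈ c, IsLowerSet (π '' t) := by
  let σ := Tuple.sort (missCount c)
  have hσ : Monotone (missCount c ∘ σ) := Tuple.monotone_sort _
  refine ⟨σ.symm, fun t ht a b hba ha => ?_⟩
  rw [Equiv.image_symm_eq_preimage] at ha ⊢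
  by_contra hb
  exact (missCount_lt_missCount_of_isChain c.toFinite hc ht ha hb).not_ge (hσ hba)

theorem mem_iff_val_lt_ncard_of_isLowerSet {s : Set (Fin m)} (hs : IsLowerSet s) (j : Fin m) :
    j ∈ s ↔ (j : ℕ) < s.ncard := by
  classical
  rw [Set.ncard_eq_toFinset_card', ← Set.filter_mem_univ_eq_toFinset]
  exact (Fin.lt_card_filter_univ_iff_apply_of_imp (· ∈ s) fun _ _ hle hi => hs hle hi).symm

theorem exists_perm_forall_mem_iff_val_lt_ncard {ι : Type*} {N : ι → Set (Fin m)}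
    (hN : IsChain (· ⊆ ·) (Set.range N)) :
    ∃ π : Equiv.Perm (Fin m), ∀ i j, j ∈ N i ↔ (π j : ℕ) < (N i).ncard := by
  obtain ⟨π, hπ⟩ := exists_perm_forall_isLowerSet_image_of_isChain hN
  refine ⟨π, fun i j => ?_⟩
  rw [← Set.ncard_image_of_injective (N i) π.injective,
    ← mem_iff_val_lt_ncard_of_isLowerSet (hπ _ ⟨i, rfl⟩), π.injective.mem_set_image]

theorem isChain_range_preimage_Ico {ι α κ : Type*} [LinearOrder ι] [Preorder α] {a b : ι → α}
    (ha : Monotone a) (hb : Antitone b) (f : κ → α) :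
    IsChain (· ⊆ ·) (Set.range fun i => f ⁻¹' Set.Ico (a i) (b i)) := by
  have hanti : Antitone fun i => f ⁻¹' Set.Ico (a i) (b i) := fun _ _ hij =>
    Set.preimage_mono (Set.Ico_subset_Ico (ha hij) (hb hij))
  exact hanti.dual_left.isChain_range

theorem ncard_val_preimage_Ico (a : ℕ) {b : ℕ} (hb : b ≤ m) :
    (Fin.val ⁻¹' Set.Ico a b : Set (Fin m)).ncard = b - a := by
  have hrange : Set.Ico a b ⊆ Set.range (Fin.val : Fin m → ℕ) := fun x hx =>
    ⟨⟨x, hx.2.trans_le hb⟩, rfl⟩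
  rw [Set.ncard_preimage_of_injective_subset_range Fin.val_injective hrange, Set.ncard_Ico_nat]

end Chain

section EdgeIdeal

variable (R : Type*) [CommSemiring R] {ι ι' κ κ' : Type*}

/-- The edge ideal of the bipartite graph with parts `ι`, `κ` and adjacency `r`: it is generated by
the products `x_i y_j` with `r i j`, the variables `x_i` and `y_j` being indexed by the left and
right summands of `ι ⊕ κ`. Ferrers ideals and generalized Ferrers ideals are instances. -/
noncomputable def bipartiteEdgeIdeal (r : ι → κ → Prop) : Ideal (MvPolynomial (ι ⊕ κ) R) :=
  Ideal.span {p | ∃ i j, r i j ∧ p = X (Sum.inl i) * X (Sum.inr j)}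

theorem map_rename_bipartiteEdgeIdeal (f : ι → ι') (g : κ → κ') (r : ι → κ → Prop) :
    (bipartiteEdgeIdeal R r).map (rename (Sum.map f g) : _ →ₐ[R] _) =
      bipartiteEdgeIdeal R (Relation.Map r f g) := by
  rw [bipartiteEdgeIdeal, bipartiteEdgeIdeal, Ideal.map_span]
  congr 1
  ext p
  constructor
  · rintro ⟨_, ⟨i, j, hij, rfl⟩, rfl⟩
    exact ⟨f i, g j, ⟨i, j, hij, rfl, rfl⟩, by simp⟩
  · rintro ⟨_, _, ⟨i, j, hij, rfl, rfl⟩, rfl⟩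
    exact ⟨_, ⟨i, j, hij, rfl⟩, by simp⟩

end EdgeIdeal

theorem generalized_ferrers_isomorphic_to_ferrers_general (R : Type*) [CommSemiring R] {ι : Type*}
    {m : ℕ} {N : ι → Set (Fin m)} (hN : IsChain (· ⊆ ·) (Set.range N)) :
    ∃ π : Equiv.Perm (Fin m),
      (bipartiteEdgeIdeal R fun i j => j ∈ N i).map
          (renameEquiv R (Equiv.sumCongr (Equiv.refl ι) π)) =
        bipartiteEdgeIdeal R fun i (j : Fin m) => (j : ℕ) < (N i).ncard := by
  obtain ⟨π, hπ⟩ := exists_perm_forall_mem_iff_val_lt_ncard hN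
  refine ⟨π, (map_rename_bipartiteEdgeIdeal R id π _).trans ?_⟩
  congr 1
  ext i j
  simp [Relation.map_apply, hπ, ← Equiv.eq_symm_apply]

/-- There is a permutation `π` of `{1,…,m}` such that the
`K`-algebra automorphism of `R = K[x_1,…,x_n,y_1,…,y_m]` fixing each `x_i` and
sending `y_j ↦ y_{π(j)}` maps the generalized Ferrers ideal `I_{λ−μ}` onto the
Ferrers ideal `I_{λ'}` with `λ' = (λ_1−μ_1,…,λ_n−μ_n)`, i.e. the ideal generated
by the `x_i y_j` with `1 ≤ i ≤ n`, `1 ≤ j ≤ λ_i − μ_i`.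
Indices: `i : Fin n`/`j : Fin m` correspond to the 1-based indices `i.val+1`/`j.val+1`. -/
theorem generalized_ferrers_isomorphic_to_ferrers
    (K : Type*) [Field K] (n m : ℕ) (hn : 1 ≤ n) (hnm : n ≤ m)
    (lam mu : Fin n → ℕ)
    (hlam_top : lam ⟨0, hn⟩ = m)
    (hlam_anti : Antitone lam)
    (hlam_pos : 1 ≤ lam ⟨n - 1, by omega⟩)
    (hmu_mono : Monotone mu)
    (hmu_lt : mu ⟨n - 1, by omega⟩ < lam ⟨n - 1, by omega⟩) :
    ∃ π : Equiv.Perm (Fin m),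
      Ideal.map
        (MvPolynomial.renameEquiv K
          (Equiv.sumCongr (Equiv.refl (Fin n)) π) :
            MvPolynomial (Fin n ⊕ Fin m) K ≃ₐ[K] MvPolynomial (Fin n ⊕ Fin m) K)
        (Ideal.span {p : MvPolynomial (Fin n ⊕ Fin m) K |
          ∃ (i : Fin n) (j : Fin m), mu i ≤ j.val ∧ j.val < lam i ∧
            p = X (Sum.inl i) * X (Sum.inr j)}) =
      Ideal.span {p : MvPolynomial (Fin n ⊕ Fin m) K |
        ∃ (i : Fin n) (j : Fin m), j.val < lam i - mu i ∧
          p = X (Sum.inl i) * X (Sum.inr j)} := by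
  have hlam_le (i : Fin n) : lam i ≤ m := hlam_top ▸ hlam_anti (Fin.mk_le_of_le_val i.val.zero_le)
  simpa only [bipartiteEdgeIdeal, Set.mem_preimage, Set.mem_Ico, and_assoc,
    fun i => ncard_val_preimage_Ico (mu i) (hlam_le i)] using
    generalized_ferrers_isomorphic_to_ferrers_general K
      (isChain_range_preimage_Ico hmu_mono hlam_anti (Fin.val : Fin m → ℕ))
end

section
/- Assume μ_i ≥ i − 1 for all i = 1,…,n, and set d := m − max_{1≤j≤n} (λ_j − μ_j + j − 1). Then the depth of S/Ī_{λ−μ} equals d; concretely: every list of elements of the irrelevant maximal ideal 𝔪 = (x_1,…,x_m) of S that is a regular sequence on the S-module S/Ī_{λ−μ} has length at most d, and there exists such a regular sequence of length exactly d. -/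
open MvPolynomial

/-! Depth is controlled through the vanishing of `Ext^i(S ⧸ 𝔪, -)`. Adding the variables
`x_0, …, x_{n-1}` to `Ī_{λ-μ}` one at a time ends at a prime ideal of variables, and the colon
ideal at the step `x_i` is `(x_l | l < i) + (x_l | μ_i ≤ l < λ_i)`, again a prime of variables, of
height `λ_i - μ_i + i`. The depth lemma along these steps gives the lower bound.

For the upper bound at row `i`, let `P = (x_l | l ≤ i)` and `Q = (x_l | μ_i ≤ l < λ_i)`, so that
`P Q ⊆ Ī_{λ-μ}`. If `μ_i = i`, then `x_i` is killed by `P + Q`, and the depth is at most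
`dim S ⧸ (P + Q)`. If `μ_i > i`, the same holds for the `P`-component of a regular element of
`P + Q` after dividing by that element; this is the easy case of Grothendieck's connectedness
theorem, and the depth is at most `dim S ⧸ (P + Q) + 1`. -/

open CategoryTheory CategoryTheory.Abelian RingTheory.Sequence

universe u

section Depth

variable {R : Type u} [CommRing R]

/-- The assertion `k ≤ depth_J M`, encoded through Rees' theorem as the vanishing of
`Ext^i(R ⧸ J, M)` for `i < k`; see `hasDepthGE_iff_exists_isRegular`. -/
def HasDepthGE (J : Ideal R) (M : Type u) [AddCommGroup M] [Module R M] (k : ℕ) : Prop :=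
  ∀ i < k, Subsingleton (Ext (ModuleCat.of R (R ⧸ J)) (ModuleCat.of R M) i)

variable {J : Ideal R} {M M₁ M₂ M₃ : Type u} [AddCommGroup M] [Module R M]
  [AddCommGroup M₁] [Module R M₁] [AddCommGroup M₂] [Module R M₂] [AddCommGroup M₃] [Module R M₃]
  {k l : ℕ}

theorem hasDepthGE_iff_exists_isRegular [IsNoetherianRing R] [Module.Finite R M]
    (hJM : J • (⊤ : Submodule R M) < ⊤) :
    HasDepthGE J M k ↔ ∃ rs : List R, rs.length = k ∧ (∀ r ∈ rs, r ∈ J) ∧ IsRegular M rs := by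
  have hsupp : Module.support R (R ⧸ J) = PrimeSpectrum.zeroLocus J := by
    rw [Module.support_eq_zeroLocus, Ideal.annihilator_quotient]
  constructor
  · exact ModuleCat.exists_isRegular_of_exists_subsingleton_ext J k (.of R M) hJM
      (.of R (R ⧸ J)) hsupp
  · rintro ⟨rs, rfl, hmem, hreg⟩
    exact ModuleCat.subsingleton_ext_of_exists_isRegular J (.of R (R ⧸ J)) hsupp.le
      (.of R M) hJM rs hmem hreg

theorem smul_top_quotient_lt_top {I J : Ideal R} (hIJ : I ≤ J)
    (hJ : J ≠ ⊤) : J • (⊤ : Submodule R (R ⧸ I)) < ⊤ := by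
  refine lt_top_iff_ne_top.mpr fun h ↦ hJ ?_
  rw [Ideal.smul_top_eq_map, Submodule.restrictScalars_eq_top_iff] at h
  rw [← Ideal.comap_map_mk hIJ]
  exact congrArg (Ideal.comap _) h

theorem HasDepthGE.mono (h : HasDepthGE J M l) (hkl : k ≤ l) : HasDepthGE J M k :=
  fun i hi ↦ h i (hi.trans_le hkl)

theorem HasDepthGE.exists_isSMulRegular [IsNoetherianRing R] [Module.Finite R M]
    (h : HasDepthGE J M (k + 1)) : ∃ r ∈ J, IsSMulRegular M r := by
  have := h 0 k.succ_pos
  have : Subsingleton ((R ⧸ J) →ₗ[R] M) :=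
    (Ext.addEquiv₀ (X := ModuleCat.of R (R ⧸ J)) (Y := ModuleCat.of R M)).trans
      ModuleCat.homAddEquiv |>.symm.subsingleton
  simpa only [Ideal.annihilator_quotient] using IsSMulRegular.subsingleton_linearMap_iff.mp this

theorem shortExact_shortComplexOfCompEqZero {f : M₁ →ₗ[R] M₂} {g : M₂ →ₗ[R] M₃}
    (hf : Function.Injective f) (hfg : Function.Exact f g) (hg : Function.Surjective g) :
    (ModuleCat.shortComplexOfCompEqZero f g hfg.linearMap_comp_eq_zero).ShortExact :=
  ModuleCat.shortComplex_shortExact _ hfg hf hg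

theorem HasDepthGE.of_exact_middle {f : M₁ →ₗ[R] M₂} {g : M₂ →ₗ[R] M₃}
    (hf : Function.Injective f) (hfg : Function.Exact f g) (hg : Function.Surjective g)
    (h₁ : HasDepthGE J M₁ k) (h₃ : HasDepthGE J M₃ k) : HasDepthGE J M₂ k := fun i hi ↦
  AddCommGrpCat.subsingleton_of_isZero <| ShortComplex.Exact.isZero_of_both_zeros
    (Ext.covariant_sequence_exact₂' _ (shortExact_shortComplexOfCompEqZero hf hfg hg) i)
    ((AddCommGrpCat.isZero_of_iff_subsingleton.mpr (h₁ i hi)).eq_zero_of_src _)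
    ((AddCommGrpCat.isZero_of_iff_subsingleton.mpr (h₃ i hi)).eq_zero_of_tgt _)

theorem HasDepthGE.of_exact_right {f : M₁ →ₗ[R] M₂} {g : M₂ →ₗ[R] M₃}
    (hf : Function.Injective f) (hfg : Function.Exact f g) (hg : Function.Surjective g)
    (h₁ : HasDepthGE J M₁ (k + 1)) (h₂ : HasDepthGE J M₂ k) : HasDepthGE J M₃ k := fun i hi ↦
  AddCommGrpCat.subsingleton_of_isZero <| ShortComplex.Exact.isZero_of_both_zeros
    (Ext.covariant_sequence_exact₃' _ (shortExact_shortComplexOfCompEqZero hf hfg hg) i (i + 1) rfl)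
    ((AddCommGrpCat.isZero_of_iff_subsingleton.mpr (h₂ i hi)).eq_zero_of_src _)
    ((AddCommGrpCat.isZero_of_iff_subsingleton.mpr (h₁ (i + 1) (by lia))).eq_zero_of_tgt _)

/- Multiplication by `r` on `Ext^i(R ⧸ J, M)` is zero because `r ∈ J`, and injective by the long
exact sequence. -/
theorem HasDepthGE.of_exact_lsmul {r : R} {g : M →ₗ[R] M₃} (hrJ : r ∈ J) (hr : IsSMulRegular M r)
    (hrg : Function.Exact (LinearMap.lsmul R M r) g) (hg : Function.Surjective g)
    (h₃ : HasDepthGE J M₃ k) : HasDepthGE J M (k + 1) := by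
  have hS := shortExact_shortComplexOfCompEqZero (f := LinearMap.lsmul R M r) hr hrg hg
  have : Mono (r • 𝟙 (ModuleCat.of R M)) := hS.mono_f
  have hann : r ∈ Module.annihilator R (R ⧸ J) := by rwa [Ideal.annihilator_quotient]
  intro i hi
  have hmono : Mono (AddCommGrpCat.ofHom
      ((Ext.mk₀ (r • 𝟙 (ModuleCat.of R M))).postcomp (.of R (R ⧸ J)) (add_zero i))) := by
    cases i with
    | zero => exact Ext.mono_postcomp_mk₀_of_mono _ _
    | succ i =>
      have := h₃ i (by lia)
      exact (Ext.covariant_sequence_exact₁' _ hS i (i + 1) rfl).mono_g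
        ((AddCommGrpCat.isZero_of_iff_subsingleton.mpr this).eq_zero_of_src _)
  exact AddCommGrpCat.subsingleton_of_isZero <| Limits.IsZero.of_mono_eq_zero _ <|
    Ext.postcomp_smul_id_eq_zero_of_mem_annihilator hann i

theorem HasDepthGE.quotSMulTop {r : R} (hr : IsSMulRegular M r) (h : HasDepthGE J M (k + 1)) :
    HasDepthGE J (QuotSMulTop r M) k :=
  .of_exact_right (f := LinearMap.lsmul R M r) hr (LinearMap.exact_lsmul_mkQ_smul_top M r)
    (Submodule.mkQ_surjective _) h (h.mono k.le_succ)

variable {I A : Ideal R} {x : R}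

theorem exact_mapQ_lsmul_factor (hA : A ≤ Submodule.comap (LinearMap.lsmul R R x) I) :
    Function.Exact (Submodule.mapQ A I (LinearMap.lsmul R R x) hA)
      (Submodule.factor (le_sup_left : I ≤ I ⊔ Ideal.span {x})) := by
  have hrange : LinearMap.range (LinearMap.lsmul R R x) = Ideal.span {x} := by
    ext; simp [Ideal.mem_span_singleton, dvd_def, eq_comm]
  rw [LinearMap.exact_iff, Submodule.factor, Submodule.ker_mapQ, Submodule.range_mapQ, hrange,
    Submodule.comap_id, Submodule.map_sup, Submodule.mkQ_map_self, bot_sup_eq]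

theorem exact_lsmul_factor (I : Ideal R) (x : R) :
    Function.Exact (LinearMap.lsmul R (R ⧸ I) x)
      (Submodule.factor (le_sup_left : I ≤ I ⊔ Ideal.span {x})) :=
  exact_mapQ_lsmul_factor (A := I) fun _ hf ↦ I.mul_mem_left x hf

theorem HasDepthGE.quotient_of_colon (hA : ∀ f, x * f ∈ I ↔ f ∈ A)
    (h₁ : HasDepthGE J (R ⧸ A) k) (h₃ : HasDepthGE J (R ⧸ I ⊔ Ideal.span {x}) k) :
    HasDepthGE J (R ⧸ I) k := by
  have hle : A = Submodule.comap (LinearMap.lsmul R R x) I := by ext f; exact (hA f).symm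
  refine .of_exact_middle ?_ (exact_mapQ_lsmul_factor hle.le) (Submodule.factor_surjective _) h₁ h₃
  rw [← LinearMap.ker_eq_bot, Submodule.ker_mapQ, ← hle, Submodule.mkQ_map_self]

theorem HasDepthGE.quotient_sup_span_singleton (hx : IsSMulRegular (R ⧸ I) x)
    (h : HasDepthGE J (R ⧸ I) (k + 1)) : HasDepthGE J (R ⧸ I ⊔ Ideal.span {x}) k :=
  .of_exact_right (f := LinearMap.lsmul R (R ⧸ I) x) hx (exact_lsmul_factor I x)
    (Submodule.factor_surjective _) h (h.mono k.le_succ)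

theorem HasDepthGE.of_quotient_sup_span_singleton (hxJ : x ∈ J) (hx : IsSMulRegular (R ⧸ I) x)
    (h : HasDepthGE J (R ⧸ I ⊔ Ideal.span {x}) k) : HasDepthGE J (R ⧸ I) (k + 1) :=
  .of_exact_lsmul hxJ hx (exact_lsmul_factor I x) (Submodule.factor_surjective _) h

end Depth

section AssociatedPrimes

variable {R : Type u} [CommRing R] {M : Type u} [AddCommGroup M] [Module R M]
  {J p : Ideal R} {r : R}

theorem injective_quotSMulTopMap_torsionBySet_subtype (hr : IsSMulRegular M r) (s : Set R) :
    Function.Injective (QuotSMulTop.map r (Submodule.torsionBySet R M s).subtype) := by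
  rw [injective_iff_map_eq_zero]
  intro y hy
  obtain ⟨y, rfl⟩ := Submodule.mkQ_surjective _ y
  obtain ⟨z, -, hz : r • z = y⟩ := (Submodule.mem_smul_pointwise_iff_exists _ _ _).mp
    ((Submodule.Quotient.mk_eq_zero _).mp hy)
  have hzs : z ∈ Submodule.torsionBySet R M s := by
    refine (Submodule.mem_torsionBySet_iff s z).mpr fun a ↦ hr.right_eq_zero_of_smul ?_
    rw [smul_comm, hz, (Submodule.mem_torsionBySet_iff s (y : M)).mp y.2 a]
  have hy' : y = r • (⟨z, hzs⟩ : Submodule.torsionBySet R M s) := Subtype.ext hz.symm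
  exact (Submodule.Quotient.mk_eq_zero _).mpr
    (hy' ▸ Submodule.smul_mem_pointwise_smul _ r ⊤ Submodule.mem_top)

variable [J.IsPrime]

theorem annihilator_quotSMulTop_le [Module.Finite R M] (hr : r ∈ J)
    (h : Module.annihilator R M ≤ J) : Module.annihilator R (QuotSMulTop r M) ≤ J := by
  rw [← Module.mem_support_iff_of_finite (p := ⟨J, ‹_›⟩), Module.support_quotSMulTop]
  exact ⟨Module.mem_support_iff_of_finite.mpr h, by simpa using hr⟩

variable [IsNoetherianRing R] [Module.Finite R M]

theorem exists_mem_associatedPrimes_le (h : Module.annihilator R M ≤ J) :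
    ∃ q ∈ associatedPrimes R M, Module.annihilator R M ≤ q ∧ q ≤ J := by
  obtain ⟨q, hq, hqJ⟩ := Ideal.exists_minimalPrimes_le h
  exact ⟨q, Module.associatedPrimes.minimalPrimes_annihilator_subset_associatedPrimes R M hq,
    hq.1.2, hqJ⟩

/- The submodule `N = {x | p x = 0}` satisfies `N ⧸ rN ↪ M ⧸ rM`, and `N ⧸ rN` is supported at
`J` by Nakayama's lemma. -/
theorem exists_mem_associatedPrimes_quotSMulTop (hr : IsSMulRegular M r) (hrJ : r ∈ J)
    (hp : p ∈ associatedPrimes R M) (hpJ : p ≤ J) :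
    ∃ q ∈ associatedPrimes R (QuotSMulTop r M), p ≤ q ∧ r ∈ q ∧ q ≤ J := by
  obtain ⟨-, x, hx⟩ := isAssociatedPrime_iff.mp hp
  have mem_p (a : R) : a ∈ p ↔ a • x = 0 := by
    rw [hx, Submodule.mem_colon_singleton, Submodule.mem_bot]
  let N := Submodule.torsionBySet R M (p : Set R)
  have hxN : x ∈ N := (Submodule.mem_torsionBySet_iff _ _).mpr fun a ↦ (mem_p a).mp a.2
  have hNJ : Module.annihilator R N ≤ J := fun a ha ↦ hpJ <| (mem_p a).mpr <|
    congrArg Subtype.val (Module.mem_annihilator.mp ha ⟨x, hxN⟩)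
  obtain ⟨q, hq, hNq, hqJ⟩ :=
    exists_mem_associatedPrimes_le (annihilator_quotSMulTop_le (M := N) hrJ hNJ)
  have hpN : (p : Set R) ⊆ Module.annihilator R N := fun a ha ↦ Module.mem_annihilator.mpr
    fun _ ↦ Submodule.torsionBySet_isTorsionBySet (p : Set R) (a := ⟨a, ha⟩)
  have hN : Module.annihilator R N ≤ Module.annihilator R (QuotSMulTop r N) :=
    (Submodule.mkQ _).annihilator_le_of_surjective (Submodule.mkQ_surjective _)
  exact ⟨q, associatedPrimes.subset_of_injective
    (injective_quotSMulTopMap_torsionBySet_subtype hr _) hq, hpN.trans (hN.trans hNq),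
    hNq (QuotSMulTop.mem_annihilator N r), hqJ⟩

end AssociatedPrimes

theorem ringKrullDim_quotient_succ_le_of_lt {R : Type*} [CommRing R] {p q : Ideal R} [p.IsPrime]
    (h : p < q) : ringKrullDim (R ⧸ q) + 1 ≤ ringKrullDim (R ⧸ p) := by
  obtain ⟨r, hrq, hrp⟩ := SetLike.exists_of_lt h
  exact ringKrullDim_succ_le_of_surjective (Ideal.Quotient.factor h.le)
    (Ideal.Quotient.factor_surjective h.le) (r := Ideal.Quotient.mk p r)
    (mem_nonZeroDivisors_of_ne_zero (by rwa [Ne, Ideal.Quotient.eq_zero_iff_mem]))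
    (by rwa [Ideal.Quotient.factor_mk, Ideal.Quotient.eq_zero_iff_mem])

section Dimension

variable {R : Type u} [CommRing R] [IsNoetherianRing R] {M : Type u} [AddCommGroup M] [Module R M]
  [Module.Finite R M] {J : Ideal R} [J.IsPrime] {k : ℕ}

theorem exists_isSMulRegular_or_exists_le_associatedPrime (M : Type u) [AddCommGroup M] [Module R M]
    [Module.Finite R M] (L : Ideal R) :
    (∃ a ∈ L, IsSMulRegular M a) ∨ ∃ p ∈ associatedPrimes R M, L ≤ p := by
  refine or_iff_not_imp_left.mpr fun h ↦ ?_
  rw [← Ideal.subset_union_prime_finite (associatedPrimes.finite R M) ⊤ ⊤ fun p hp _ _ ↦ hp.1,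
    biUnion_associatedPrimes_eq_compl_regular]
  exact fun a haL har ↦ h ⟨a, haL, har⟩

theorem HasDepthGE.le_ringKrullDim_quotient_of_mem_associatedPrimes {p : Ideal R}
    (h : HasDepthGE J M k) (hp : p ∈ associatedPrimes R M) (hpJ : p ≤ J) :
    k ≤ ringKrullDim (R ⧸ p) := by
  induction k generalizing M p with
  | zero =>
    have := hp.1.ne_top
    have := Ideal.Quotient.nontrivial_iff.mpr this
    exact ringKrullDim_nonneg_of_nontrivial
  | succ k ih =>
    obtain ⟨r, hrJ, hr⟩ := h.exists_isSMulRegular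
    obtain ⟨q, hq, hpq, hrq, hqJ⟩ := exists_mem_associatedPrimes_quotSMulTop hr hrJ hp hpJ
    have hrp : r ∉ p := fun hrp ↦
      (biUnion_associatedPrimes_eq_compl_regular R M).le (Set.mem_biUnion hp hrp) hr
    have := hp.1
    calc ((k + 1 : ℕ) : WithBot ℕ∞) = k + 1 := by norm_cast
      _ ≤ ringKrullDim (R ⧸ q) + 1 := by gcongr; exact ih (h.quotSMulTop hr) hq hqJ
      _ ≤ ringKrullDim (R ⧸ p) :=
        ringKrullDim_quotient_succ_le_of_lt (SetLike.lt_iff_le_and_exists.mpr ⟨hpq, r, hrq, hrp⟩)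

theorem HasDepthGE.le_ringKrullDim_quotient_of_le_torsionOf {L : Ideal R} {u : M}
    (h : HasDepthGE J M k) (hL : L ≤ Ideal.torsionOf R M u) (hJ : Ideal.torsionOf R M u ≤ J) :
    k ≤ ringKrullDim (R ⧸ L) := by
  have hann := Ideal.annihilator_span_singleton_eq_torsionOf (R := R) u
  obtain ⟨q, hq, huq, hqJ⟩ := exists_mem_associatedPrimes_le (hann.trans_le hJ)
  have hqM := associatedPrimes.subset_of_injective (Submodule.subtype_injective _) hq
  have hLq : L ≤ q := hL.trans (hann.ge.trans huq)
  exact (h.le_ringKrullDim_quotient_of_mem_associatedPrimes hqM hqJ).trans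
    (ringKrullDim_le_of_surjective _ (Ideal.Quotient.factor_surjective hLq))

end Dimension

section Connectedness

variable {R : Type u} [CommRing R] {I P Q J : Ideal R} {k : ℕ}

theorem mem_torsionOf_mk {s u : R} :
    s ∈ Ideal.torsionOf R (R ⧸ I) (Ideal.Quotient.mk I u) ↔ s * u ∈ I := by
  rw [Ideal.mem_torsionOf_iff, ← Ideal.Quotient.eq_zero_iff_mem, map_mul]
  rfl

theorem sup_le_torsionOf_mk (hPQ : P * Q ≤ I) {a₁ a₂ : R} (ha₁ : a₁ ∈ P) (ha₂ : a₂ ∈ Q) :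
    P ⊔ Q ≤ Ideal.torsionOf R (R ⧸ I ⊔ Ideal.span {a₁ + a₂}) (Ideal.Quotient.mk _ a₁) := by
  refine sup_le (fun p hp ↦ mem_torsionOf_mk.mpr ?_) fun q hq ↦ mem_torsionOf_mk.mpr ?_
  · have hpa₂ : p * a₂ ∈ I := hPQ (Ideal.mul_mem_mul hp ha₂)
    have hsplit : p * a₁ = -(p * a₂) + p * (a₁ + a₂) := by ring
    rw [hsplit]
    exact Submodule.add_mem_sup (I.neg_mem hpa₂)
      (Ideal.mul_mem_left _ p (Ideal.mem_span_singleton_self _))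
  · exact Ideal.mem_sup_left (mul_comm a₁ q ▸ hPQ (Ideal.mul_mem_mul ha₁ hq))

theorem torsionOf_mk_le_of_isSMulRegular (hPQ : P * Q ≤ I) {a₁ a₂ x y : R} (ha₁ : a₁ ∈ P)
    (ha₂ : a₂ ∈ Q) (ha : IsSMulRegular (R ⧸ I) (a₁ + a₂)) (hxP : x ∈ P) (hyQ : y ∈ Q)
    (hx : ∀ s, s * x ∈ I → s ∈ J) (hy : ∀ s, s * y ∈ I → s ∈ J) :
    Ideal.torsionOf R (R ⧸ I ⊔ Ideal.span {a₁ + a₂}) (Ideal.Quotient.mk _ a₁) ≤ J := by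
  intro s hs
  obtain ⟨b, hb, _, hw, hbs⟩ := Submodule.mem_sup.mp (mem_torsionOf_mk.mp hs)
  obtain ⟨w, rfl⟩ := Ideal.mem_span_singleton'.mp hw
  have cancel (f : R) (hf : (a₁ + a₂) * f ∈ I) : f ∈ I :=
    mem_of_isSMulRegular_quotient_of_smul_mem ha hf
  have hxa₂ : x * a₂ ∈ I := hPQ (Ideal.mul_mem_mul hxP ha₂)
  have hya₁ : a₁ * y ∈ I := hPQ (Ideal.mul_mem_mul ha₁ hyQ)
  have hsw : (s - w) * x ∈ I := cancel _ <| by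
    have : (a₁ + a₂) * ((s - w) * x) = x * b + s * (x * a₂) := by linear_combination -x * hbs
    exact this ▸ I.add_mem (I.mul_mem_left x hb) (I.mul_mem_left s hxa₂)
  have hw : w * y ∈ I := cancel _ <| by
    have : (a₁ + a₂) * (w * y) = s * (a₁ * y) - y * b := by linear_combination y * hbs
    exact this ▸ I.sub_mem (I.mul_mem_left s hya₁) (I.mul_mem_left y hb)
  simpa only [sub_add_cancel] using J.add_mem (hx _ hsw) (hy _ hw)

variable [IsNoetherianRing R] [J.IsPrime]

/- If `a = a₁ + a₂ ∈ P + Q` is regular modulo `I`, then the class of `a₁` in `R ⧸ (I + (a))` is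
killed by `P + Q`, and its annihilator stays inside `J`. -/
theorem HasDepthGE.le_ringKrullDim_quotient_sup_add_one {x y : R} (h : HasDepthGE J (R ⧸ I) k)
    (hJ : ∀ {f s}, f ∉ I → s * f ∈ I → s ∈ J) (hPQ : P * Q ≤ I)
    (hxP : x ∈ P) (hxI : x ∉ I) (hyQ : y ∈ Q) (hyI : y ∉ I) :
    k ≤ ringKrullDim (R ⧸ P ⊔ Q) + 1 := by
  obtain ⟨a, haPQ, ha⟩ | ⟨p, hp, hPQp⟩ :=
    exists_isSMulRegular_or_exists_le_associatedPrime (R ⧸ I) (P ⊔ Q)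
  · obtain ⟨a₁, ha₁, a₂, ha₂, rfl⟩ := Submodule.mem_sup.mp haPQ
    have hdepth : HasDepthGE J (R ⧸ I ⊔ Ideal.span {a₁ + a₂}) (k - 1) := by
      cases k with
      | zero => exact fun i hi ↦ absurd hi i.not_lt_zero
      | succ k => exact h.quotient_sup_span_singleton ha
    have hle : ((k - 1 : ℕ) : WithBot ℕ∞) ≤ ringKrullDim (R ⧸ P ⊔ Q) :=
      hdepth.le_ringKrullDim_quotient_of_le_torsionOf (sup_le_torsionOf_mk hPQ ha₁ ha₂) <|
        torsionOf_mk_le_of_isSMulRegular hPQ ha₁ ha₂ ha hxP hyQ (fun _ ↦ hJ hxI) fun _ ↦ hJ hyI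
    calc (k : WithBot ℕ∞) ≤ (k - 1 : ℕ) + 1 := by exact_mod_cast Nat.le_add_of_sub_le le_rfl
      _ ≤ ringKrullDim (R ⧸ P ⊔ Q) + 1 := by gcongr
  · have hpJ : p ≤ J := fun s hs ↦ by
      by_contra hsJ
      exact (biUnion_associatedPrimes_eq_compl_regular R (R ⧸ I)).le (Set.mem_biUnion hp hs) <|
        (isSMulRegular_quotient_iff_mem_of_smul_mem I s).mpr fun f hf ↦
          by_contra fun hfI ↦ hsJ (hJ hfI hf)
    calc (k : WithBot ℕ∞) ≤ ringKrullDim (R ⧸ p) :=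
          h.le_ringKrullDim_quotient_of_mem_associatedPrimes hp hpJ
      _ ≤ ringKrullDim (R ⧸ P ⊔ Q) :=
          ringKrullDim_le_of_surjective _ (Ideal.Quotient.factor_surjective hPQp)
      _ ≤ ringKrullDim (R ⧸ P ⊔ Q) + 1 := le_add_of_nonneg_right zero_le_one

end Connectedness

section Polynomial

variable {σ R : Type*} [CommRing R] {s t : Set σ} {f : MvPolynomial σ R} {i : σ}

variable (R) in
/-- The ideal `(x_i | i ∈ s)` of the polynomial ring. -/
noncomputable def variableIdeal (s : Set σ) : Ideal (MvPolynomial σ R) :=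
  Ideal.span (X '' s)

theorem X_mem_variableIdeal (hi : i ∈ s) : X i ∈ variableIdeal R s :=
  Ideal.subset_span ⟨i, hi, rfl⟩

theorem mem_variableIdeal_iff : f ∈ variableIdeal R s ↔ ∀ e ∈ f.support, ∃ i ∈ s, e i ≠ 0 :=
  mem_ideal_span_X_image

theorem variableIdeal_le_iff {I : Ideal (MvPolynomial σ R)} :
    variableIdeal R s ≤ I ↔ ∀ i ∈ s, X i ∈ I := by
  rw [variableIdeal, Ideal.span_le, Set.image_subset_iff]
  rfl

theorem variableIdeal_mono (h : s ⊆ t) : variableIdeal R s ≤ variableIdeal R t :=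
  Ideal.span_mono (Set.image_mono h)

theorem variableIdeal_union : variableIdeal R (s ∪ t) = variableIdeal R s ⊔ variableIdeal R t := by
  rw [variableIdeal, Set.image_union, Ideal.span_union]
  rfl

theorem variableIdeal_singleton : variableIdeal R {i} = Ideal.span {X i} := by
  rw [variableIdeal, Set.image_singleton]

theorem mem_variableIdeal_of_X_mul_mem (hi : i ∉ s) (h : X i * f ∈ variableIdeal R s) :
    f ∈ variableIdeal R s := by
  classical
  rw [mem_variableIdeal_iff] at h ⊢
  intro e he
  obtain ⟨j, hj, hej⟩ := h (Finsupp.single i 1 + e) <| by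
    rw [support_X_mul]
    exact Finset.mem_map_of_mem _ he
  have hij : i ≠ j := fun hij ↦ hi (hij ▸ hj)
  exact ⟨j, hj, by simpa [Finsupp.single_eq_of_ne' hij] using hej⟩

theorem idealOfVars_eq_ker_constantCoeff :
    idealOfVars σ R = RingHom.ker (constantCoeff : MvPolynomial σ R →+* R) := by
  ext f
  rw [idealOfVars, ← Set.image_univ, mem_ideal_span_X_image, RingHom.mem_ker, constantCoeff_eq]
  refine ⟨fun h ↦ by_contra fun h0 ↦ ?_, fun h e he ↦ ?_⟩
  · obtain ⟨i, -, hi⟩ := h 0 (mem_support_iff.mpr h0)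
    exact hi rfl
  · have he0 : e ≠ 0 := fun he0 ↦ mem_support_iff.mp he (he0 ▸ h)
    simpa [Finsupp.ext_iff] using he0

instance isPrime_idealOfVars [IsDomain R] : (idealOfVars σ R).IsPrime :=
  idealOfVars_eq_ker_constantCoeff (σ := σ) (R := R) ▸ RingHom.ker_isPrime _

/- Otherwise the constant term of `g` is nonzero; multiplying it by a minimal monomial of `f`
outside the ideal gives a monomial of `g * f` outside the ideal. -/
theorem mem_idealOfVars_of_mul_mem_span_monomial [IsDomain R] {A : Set (σ →₀ ℕ)}
    {g : MvPolynomial σ R} (hf : f ∉ Ideal.span ((fun e ↦ monomial e (1 : R)) '' A))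
    (hgf : g * f ∈ Ideal.span ((fun e ↦ monomial e (1 : R)) '' A)) : g ∈ idealOfVars σ R := by
  classical
  rw [idealOfVars_eq_ker_constantCoeff, RingHom.mem_ker, constantCoeff_eq]
  by_contra hg
  rw [mem_ideal_span_monomial_image] at hf hgf
  push Not at hf
  obtain ⟨e, he⟩ := (f.support.filter fun e ↦ ∀ a ∈ A, ¬ a ≤ e).exists_minimal <| by
    obtain ⟨e, he, heA⟩ := hf
    exact ⟨e, Finset.mem_filter.mpr ⟨he, heA⟩⟩
  obtain ⟨hef, heA⟩ := Finset.mem_filter.mp he.prop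
  have hcoeff : coeff e (g * f) = coeff 0 g * coeff e f := by
    rw [coeff_mul]
    refine Finset.sum_eq_single_of_mem (0, e) (by simp) fun b hb hbe ↦ ?_
    have hsum : b.1 + b.2 = e := Finset.HasAntidiagonal.mem_antidiagonal.mp hb
    have hbe' : b.2 ≤ e := hsum ▸ le_add_self
    suffices hbf : b.2 ∉ f.support by rw [notMem_support_iff.mp hbf, mul_zero]
    intro hbf
    have heb : e ≤ b.2 :=
      he.le_of_le (Finset.mem_filter.mpr ⟨hbf, fun a ha hab ↦ heA a ha (hab.trans hbe')⟩) hbe'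
    have hb2 : b.2 = e := hbe'.antisymm heb
    exact hbe (Prod.ext (by simpa [hb2] using hsum) hb2)
  obtain ⟨a, haA, hae⟩ := hgf e <| by
    rw [mem_support_iff, hcoeff]
    exact mul_ne_zero hg (mem_support_iff.mp hef)
  exact heA a haA hae

theorem hasDepthGE_quotient_variableIdeal (s : Set σ) :
    HasDepthGE (idealOfVars σ R) (MvPolynomial σ R ⧸ variableIdeal R s) sᶜ.ncard := by
  induction hk : sᶜ.ncard generalizing s with
  | zero => exact fun i hi ↦ absurd hi i.not_lt_zero
  | succ k ih =>
    obtain ⟨i, hi⟩ : sᶜ.Nonempty := Set.nonempty_of_ncard_ne_zero (by lia)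
    have hreg : IsSMulRegular (MvPolynomial σ R ⧸ variableIdeal R s) (X i : MvPolynomial σ R) :=
      (isSMulRegular_quotient_iff_mem_of_smul_mem _ _).mpr fun f ↦
        mem_variableIdeal_of_X_mul_mem hi
    refine .of_quotient_sup_span_singleton (Ideal.subset_span ⟨i, rfl⟩) hreg ?_
    rw [← variableIdeal_singleton, ← variableIdeal_union]
    refine ih _ ?_
    rw [Set.compl_union, ← Set.sdiff_eq, Set.ncard_sdiff_singleton_of_mem hi, hk,
      Nat.add_sub_cancel]

theorem ringKrullDim_quotient_variableIdeal_le {K : Type*} [Field K] [Finite σ] (s : Set σ) :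
    ringKrullDim (MvPolynomial σ K ⧸ variableIdeal K s) ≤ sᶜ.ncard := by
  let φ : MvPolynomial (sᶜ : Set σ) K →ₐ[K] MvPolynomial σ K ⧸ variableIdeal K s :=
    (Ideal.Quotient.mkₐ K _).comp (rename Subtype.val)
  have hrange : (Ideal.Quotient.mkₐ K (variableIdeal K s)).range ≤ φ.range := by
    rw [← Algebra.map_top, ← adjoin_range_X, AlgHom.map_adjoin, Algebra.adjoin_le_iff]
    rintro _ ⟨_, ⟨i, rfl⟩, rfl⟩
    by_cases hi : i ∈ s
    · have hmk := Ideal.Quotient.eq_zero_iff_mem.mpr (X_mem_variableIdeal (R := K) hi)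
      exact ⟨0, (map_zero φ).trans hmk.symm⟩
    · exact ⟨X ⟨i, hi⟩, congrArg (Ideal.Quotient.mk _) (rename_X Subtype.val ⟨i, hi⟩)⟩
  have hsurj : Function.Surjective φ := fun y ↦
    hrange (Ideal.Quotient.mkₐ_surjective K (variableIdeal K s) y)
  calc ringKrullDim (MvPolynomial σ K ⧸ variableIdeal K s)
      ≤ ringKrullDim (MvPolynomial (sᶜ : Set σ) K) :=
        ringKrullDim_le_of_surjective φ.toRingHom hsurj
    _ = sᶜ.ncard := by
      rw [MvPolynomial.ringKrullDim_of_isNoetherianRing, ringKrullDim_eq_zero_of_field, zero_add,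
        Nat.card_coe_set_eq]

end Polynomial

theorem le_sub_ciSup_iff {ι : Type*} [Finite ι] [Nonempty ι] {f : ι → ℕ} {k m : ℕ}
    (hf : ∀ i, f i ≤ m) : k ≤ m - ⨆ i, f i ↔ ∀ i, k + f i ≤ m := by
  have hsup : ⨆ i, f i ≤ m := ciSup_le hf
  have hbdd : BddAbove (Set.range f) := Set.finite_range f |>.bddAbove
  refine ⟨fun h i ↦ ?_, fun h ↦ ?_⟩
  · have := le_ciSup hbdd i
    lia
  · obtain ⟨i, hi⟩ := exists_eq_ciSup_of_finite (f := f)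
    have := h i
    lia

section Ferrers

variable {R : Type*} [CommRing R] {n m : ℕ} {hnm : n ≤ m} {lam mu : Fin n → ℕ} {k : ℕ}

variable (R hnm lam mu) in
/-- The specialized Ferrers ideal `Ī_{λ-μ}`, generated by the `x_i x_j` with `μ_i ≤ j < λ_i`
in 0-based indices. -/
noncomputable def specializedFerrersIdeal : Ideal (MvPolynomial (Fin m) R) :=
  Ideal.span {p | ∃ (i : Fin n) (j : Fin m), mu i ≤ j.val ∧ j.val < lam i ∧
    p = X (Fin.castLE hnm i) * X j}

theorem X_mul_X_mem_specializedFerrersIdeal {i : Fin n} {j : Fin m} (hij : mu i ≤ j)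
    (hji : j < lam i) : X (Fin.castLE hnm i) * X j ∈ specializedFerrersIdeal R hnm lam mu :=
  Ideal.subset_span ⟨i, j, hij, hji, rfl⟩

theorem specializedFerrersIdeal_le_iff {I : Ideal (MvPolynomial (Fin m) R)} :
    specializedFerrersIdeal R hnm lam mu ≤ I ↔ ∀ (i : Fin n) (j : Fin m), mu i ≤ j → j < lam i →
      X (Fin.castLE hnm i) * X j ∈ I := by
  refine ⟨fun h i j hij hji ↦ h (X_mul_X_mem_specializedFerrersIdeal hij hji),
    fun h ↦ Ideal.span_le.mpr ?_⟩
  rintro _ ⟨i, j, hij, hji, rfl⟩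
  exact h i j hij hji

theorem specializedFerrersIdeal_eq_span_monomial :
    specializedFerrersIdeal R hnm lam mu = Ideal.span ((fun e ↦ monomial e (1 : R)) ''
      {e | ∃ (i : Fin n) (j : Fin m), mu i ≤ j ∧ j < lam i ∧
        e = Finsupp.single (Fin.castLE hnm i) 1 + Finsupp.single j 1}) := by
  rw [specializedFerrersIdeal]
  congr 1
  ext p
  constructor
  · rintro ⟨i, j, hij, hji, rfl⟩
    exact ⟨_, ⟨i, j, hij, hji, rfl⟩, by simp [X, monomial_mul]⟩
  · rintro ⟨_, ⟨i, j, hij, hji, rfl⟩, rfl⟩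
    exact ⟨i, j, hij, hji, by simp [X, monomial_mul]⟩

theorem specializedFerrersIdeal_le_idealOfVars :
    specializedFerrersIdeal R hnm lam mu ≤ idealOfVars (Fin m) R :=
  specializedFerrersIdeal_le_iff.mpr fun _ j _ _ ↦
    Ideal.mul_mem_left _ _ (Ideal.subset_span ⟨j, rfl⟩)

theorem X_notMem_specializedFerrersIdeal [Nontrivial R] (l : Fin m) :
    X l ∉ specializedFerrersIdeal R hnm lam mu := by
  rw [specializedFerrersIdeal_eq_span_monomial, mem_ideal_span_monomial_image]
  intro h
  obtain ⟨_, ⟨i, j, -, -, rfl⟩, hle⟩ := h (Finsupp.single l 1) (by simp)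
  have hdeg := Finsupp.degree_mono hle
  simp only [map_add, Finsupp.degree_single] at hdeg
  lia

theorem mem_idealOfVars_of_mul_mem_specializedFerrersIdeal [IsDomain R]
    {f g : MvPolynomial (Fin m) R}
    (hf : f ∉ specializedFerrersIdeal R hnm lam mu)
    (hgf : g * f ∈ specializedFerrersIdeal R hnm lam mu) : g ∈ idealOfVars (Fin m) R := by
  rw [specializedFerrersIdeal_eq_span_monomial] at hf hgf
  exact mem_idealOfVars_of_mul_mem_span_monomial hf hgf

theorem ncard_compl_lt_union_Ico {t a b : ℕ} (hta : t ≤ a) (htm : t ≤ m) (hbm : b ≤ m) :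
    ({l : Fin m | l < t} ∪ {l : Fin m | a ≤ l ∧ l < b})ᶜ.ncard + (t + (b - a)) = m := by
  have hcard : ({l : Fin m | l < t} ∪ {l : Fin m | a ≤ l ∧ l < b}).ncard = t + (b - a) := by
    rw [← Set.ncard_image_of_injective _ Fin.val_injective]
    have himage : Fin.val '' ({l : Fin m | l < t} ∪ {l : Fin m | a ≤ l ∧ l < b}) =
        (Finset.range t ∪ Finset.Ico a b : Finset ℕ) := by
      ext x
      simp only [Set.mem_image, Set.mem_union, Set.mem_ofPred_eq, Finset.coe_union,
        Finset.coe_range, Finset.coe_Ico, Set.mem_Iio, Set.mem_Ico]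
      exact ⟨fun ⟨_, hl, hlx⟩ ↦ hlx ▸ hl, fun hx ↦ ⟨⟨x, by lia⟩, hx, rfl⟩⟩
    rw [himage, Set.ncard_coe_finset, Finset.card_union_of_disjoint, Finset.card_range,
      Nat.card_Ico]
    exact Finset.disjoint_left.mpr fun x hx hx' ↦ by
      rw [Finset.mem_range] at hx
      rw [Finset.mem_Ico] at hx'
      lia
  have := Set.ncard_add_ncard_compl ({l : Fin m | l < t} ∪ {l : Fin m | a ≤ l ∧ l < b})
  rw [Nat.card_fin] at this
  lia

section LowerBound

variable (R hnm lam mu) in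
/-- The ideal `Ī_{λ-μ} + (x_l | l < t)`. These interpolate between `Ī_{λ-μ}` at `t = 0` and an
ideal generated by variables at `t = n`. -/
noncomputable def ferrersFiltration (t : ℕ) : Ideal (MvPolynomial (Fin m) R) :=
  variableIdeal R {l : Fin m | l < t} ⊔ specializedFerrersIdeal R hnm lam mu

theorem ferrersFiltration_zero :
    ferrersFiltration R hnm lam mu 0 = specializedFerrersIdeal R hnm lam mu := by
  simp [ferrersFiltration, variableIdeal]

theorem ferrersFiltration_self :
    ferrersFiltration R hnm lam mu n = variableIdeal R {l : Fin m | l < n} :=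
  sup_eq_left.mpr <| specializedFerrersIdeal_le_iff.mpr fun i _ _ _ ↦
    Ideal.mul_mem_right _ _ (X_mem_variableIdeal i.2)

theorem ferrersFiltration_sup_span_X (i : Fin n) :
    ferrersFiltration R hnm lam mu i ⊔ Ideal.span {X (Fin.castLE hnm i)} =
      ferrersFiltration R hnm lam mu (i + 1) := by
  have hset : {l : Fin m | l < i.val + 1} = {l : Fin m | l < i.val} ∪ {Fin.castLE hnm i} := by
    ext l
    simp only [Set.mem_ofPred_eq, Set.mem_union, Set.mem_singleton_iff, Fin.ext_iff,
      Fin.val_castLE]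
    lia
  rw [ferrersFiltration, ferrersFiltration, hset, variableIdeal_union, variableIdeal_singleton,
    sup_right_comm]

/- Every row after `i` lies inside row `i` and avoids `x_i`, so only row `i` contributes a multiple
of `x_i`. -/
theorem ferrersFiltration_le (hlam : Antitone lam) (hmu : Monotone mu)
    (hle : ∀ i : Fin n, i ≤ mu i) (i : Fin n) :
    ferrersFiltration R hnm lam mu i ≤
      variableIdeal R (({l : Fin m | l < i.val} ∪ {l : Fin m | mu i ≤ l ∧ l < lam i}) \
          {Fin.castLE hnm i}) ⊔
        Ideal.span {X (Fin.castLE hnm i)} * variableIdeal R {l : Fin m | mu i ≤ l ∧ l < lam i} := by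
  refine sup_le ?_ (specializedFerrersIdeal_le_iff.mpr fun r j hrj hjr ↦ ?_)
  · refine (variableIdeal_mono fun l hl ↦ ?_).trans le_sup_left
    exact ⟨Or.inl hl, fun hli ↦ Nat.ne_of_lt hl (congrArg Fin.val hli)⟩
  rcases lt_trichotomy r i with hri | rfl | hir
  · have hri' : Fin.castLE hnm r ≠ Fin.castLE hnm i := (Fin.castLE_injective hnm).ne hri.ne
    exact Ideal.mem_sup_left (Ideal.mul_mem_right _ _ (X_mem_variableIdeal ⟨Or.inl hri, hri'⟩))
  · exact Ideal.mem_sup_right (Ideal.mul_mem_mul (Ideal.mem_span_singleton_self _)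
      (X_mem_variableIdeal ⟨hrj, hjr⟩))
  · have hji : j ≠ Fin.castLE hnm i := by
      rintro rfl
      exact (Fin.lt_def.mp hir |>.trans_le (hle r)).not_ge hrj
    have hj : mu i ≤ j ∧ j < lam i := ⟨(hmu hir.le).trans hrj, hjr.trans_le (hlam hir.le)⟩
    exact Ideal.mem_sup_left (Ideal.mul_mem_left _ _ (X_mem_variableIdeal ⟨Or.inr hj, hji⟩))

theorem X_mul_mem_ferrersFiltration_iff (hlam : Antitone lam) (hmu : Monotone mu)
    (hle : ∀ i : Fin n, i ≤ mu i) (i : Fin n) (f : MvPolynomial (Fin m) R) :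
    X (Fin.castLE hnm i) * f ∈ ferrersFiltration R hnm lam mu i ↔
      f ∈ variableIdeal R ({l : Fin m | l < i.val} ∪ {l : Fin m | mu i ≤ l ∧ l < lam i}) := by
  constructor
  · intro hf
    obtain ⟨b, hb, _, hXq, hbq⟩ := Submodule.mem_sup.mp (ferrersFiltration_le hlam hmu hle i hf)
    obtain ⟨q, hq, rfl⟩ := Ideal.mem_span_singleton_mul.mp hXq
    have hXfq : X (Fin.castLE hnm i) * (f - q) = b := by linear_combination -hbq
    have hfq := mem_variableIdeal_of_X_mul_mem (fun h ↦ h.2 rfl) (hXfq ▸ hb)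
    rw [← sub_add_cancel f q]
    exact Ideal.add_mem _ (variableIdeal_mono Set.sdiff_subset hfq)
      (variableIdeal_mono Set.subset_union_right hq)
  · suffices hle' : variableIdeal R _ ≤ Submodule.comap
        (LinearMap.lsmul _ _ (X (Fin.castLE hnm i))) (ferrersFiltration R hnm lam mu i) from
      fun hf ↦ hle' hf
    refine variableIdeal_le_iff.mpr fun l hl ↦ ?_
    rcases hl with hl | ⟨hil, hli⟩
    · exact Ideal.mem_sup_left (Ideal.mul_mem_left _ _ (X_mem_variableIdeal hl))
    · exact Ideal.mem_sup_right (X_mul_X_mem_specializedFerrersIdeal hil hli)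

theorem HasDepthGE.ferrersFiltration_of_succ (hlam : Antitone lam) (hmu : Monotone mu)
    (hle : ∀ i : Fin n, i ≤ mu i) {i : Fin n} (hlam_le : lam i ≤ m)
    (hk : k + (lam i - mu i + i) ≤ m)
    (h : HasDepthGE (idealOfVars (Fin m) R)
      (MvPolynomial (Fin m) R ⧸ ferrersFiltration R hnm lam mu (i + 1)) k) :
    HasDepthGE (idealOfVars (Fin m) R)
      (MvPolynomial (Fin m) R ⧸ ferrersFiltration R hnm lam mu i) k := by
  have hcard := ncard_compl_lt_union_Ico (hle i) (i.2.le.trans hnm) hlam_le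
  refine .quotient_of_colon (X_mul_mem_ferrersFiltration_iff hlam hmu hle i)
    ((hasDepthGE_quotient_variableIdeal _).mono (by lia)) ?_
  rwa [ferrersFiltration_sup_span_X]

theorem hasDepthGE_quotient_specializedFerrersIdeal (hlam : Antitone lam) (hmu : Monotone mu)
    (hle : ∀ i : Fin n, i ≤ mu i) (hlam_le : ∀ i, lam i ≤ m) (hkn : k + n ≤ m)
    (hk : ∀ i, k + (lam i - mu i + i) ≤ m) :
    HasDepthGE (idealOfVars (Fin m) R)
      (MvPolynomial (Fin m) R ⧸ specializedFerrersIdeal R hnm lam mu) k := by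
  have hlast : HasDepthGE (idealOfVars (Fin m) R)
      (MvPolynomial (Fin m) R ⧸ ferrersFiltration R hnm lam mu n) k := by
    rw [ferrersFiltration_self]
    have hcard := Set.ncard_add_ncard_compl {l : Fin m | l < n}
    rw [← Fin.range_castLE hnm, Set.ncard_range_of_injective (Fin.castLE_injective hnm),
      Nat.card_fin, Nat.card_fin, Fin.range_castLE hnm] at hcard
    exact (hasDepthGE_quotient_variableIdeal _).mono (by lia)
  rw [← ferrersFiltration_zero]
  exact Nat.decreasingInduction' (P := fun t ↦ HasDepthGE (idealOfVars (Fin m) R)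
    (MvPolynomial (Fin m) R ⧸ ferrersFiltration R hnm lam mu t) k)
    (fun t htn _ h ↦ .ferrersFiltration_of_succ hlam hmu hle (i := ⟨t, htn⟩) (hlam_le _) (hk _) h)
    n.zero_le hlast

end LowerBound

theorem variableIdeal_mul_variableIdeal_le (hlam : Antitone lam) (hmu : Monotone mu) (i : Fin n) :
    variableIdeal R {l : Fin m | l < i.val + 1} *
        variableIdeal R {l : Fin m | mu i ≤ l ∧ l < lam i} ≤
      specializedFerrersIdeal R hnm lam mu := by
  rw [variableIdeal, variableIdeal, Ideal.span_mul_span', Ideal.span_le]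
  rintro _ ⟨_, ⟨r, hr, rfl⟩, _, ⟨j, ⟨hij, hji⟩, rfl⟩, rfl⟩
  let r' : Fin n := ⟨r, (Nat.lt_succ_iff.mp hr).trans_lt i.2⟩
  have hri : r' ≤ i := Nat.lt_succ_iff.mp hr
  exact X_mul_X_mem_specializedFerrersIdeal (i := r') ((hmu hri).trans hij)
    (hji.trans_le (hlam hri))

variable {K : Type*} [Field K]

theorem HasDepthGE.add_row_le (hlam : Antitone lam) (hmu : Monotone mu) {i : Fin n}
    (hle : i ≤ mu i) (hlt : mu i < lam i) (hlam_le : lam i ≤ m)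
    (h : HasDepthGE (idealOfVars (Fin m) K)
      (MvPolynomial (Fin m) K ⧸ specializedFerrersIdeal K hnm lam mu) k) :
    k + (lam i - mu i + i) ≤ m := by
  have hPQ := variableIdeal_mul_variableIdeal_le (R := K) (hnm := hnm) hlam hmu i
  have hX : X (Fin.castLE hnm i) ∈ variableIdeal K {l : Fin m | l < i.val + 1} :=
    X_mem_variableIdeal (Nat.lt_succ_self _)
  obtain hlt' | heq := hle.lt_or_eq
  · have hXmu : X ⟨mu i, hlt.trans_le hlam_le⟩ ∈
        variableIdeal K {l : Fin m | mu i ≤ l ∧ l < lam i} :=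
      X_mem_variableIdeal ⟨le_rfl, hlt⟩
    have hdim := h.le_ringKrullDim_quotient_sup_add_one
      mem_idealOfVars_of_mul_mem_specializedFerrersIdeal hPQ hX
      (X_notMem_specializedFerrersIdeal _) hXmu (X_notMem_specializedFerrersIdeal _)
    rw [← variableIdeal_union] at hdim
    have hcard := ncard_compl_lt_union_Ico (m := m) hlt'
      (Nat.succ_le_of_lt (i.2.trans_le hnm)) hlam_le
    have := hdim.trans (add_le_add_left (ringKrullDim_quotient_variableIdeal_le _) 1)
    norm_cast at this
    lia
  · have hXQ : X (Fin.castLE hnm i) ∈ variableIdeal K {l : Fin m | mu i ≤ l ∧ l < lam i} :=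
      X_mem_variableIdeal ⟨heq.ge, heq.trans_lt hlt⟩
    have hL : variableIdeal K ({l : Fin m | l < i.val} ∪ {l : Fin m | mu i ≤ l ∧ l < lam i}) ≤
        Ideal.torsionOf _ (MvPolynomial (Fin m) K ⧸ specializedFerrersIdeal K hnm lam mu)
          (Ideal.Quotient.mk _ (X (Fin.castLE hnm i))) := by
      refine variableIdeal_le_iff.mpr fun l hl ↦ mem_torsionOf_mk.mpr ?_
      rcases hl with hl | hl
      · exact hPQ (Ideal.mul_mem_mul (X_mem_variableIdeal (Nat.lt_succ_of_lt hl)) hXQ)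
      · rw [mul_comm]
        exact hPQ (Ideal.mul_mem_mul hX (X_mem_variableIdeal hl))
    have hdim := h.le_ringKrullDim_quotient_of_le_torsionOf hL fun f hf ↦
      mem_idealOfVars_of_mul_mem_specializedFerrersIdeal (X_notMem_specializedFerrersIdeal _)
        (mem_torsionOf_mk.mp hf)
    have hcard := ncard_compl_lt_union_Ico hle (i.2.le.trans hnm) hlam_le
    have := hdim.trans (ringKrullDim_quotient_variableIdeal_le _)
    norm_cast at this
    lia

theorem hasDepthGE_quotient_specializedFerrersIdeal_iff (hn : 0 < n) (hlam : Antitone lam)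
    (hmu : Monotone mu) (hle : ∀ i : Fin n, i ≤ mu i) (hlt : ∀ i, mu i < lam i)
    (hlam_le : ∀ i, lam i ≤ m) :
    HasDepthGE (idealOfVars (Fin m) K)
        (MvPolynomial (Fin m) K ⧸ specializedFerrersIdeal K hnm lam mu) k ↔
      ∀ i, k + (lam i - mu i + i) ≤ m := by
  refine ⟨fun h i ↦ h.add_row_le hlam hmu (hle i) (hlt i) (hlam_le i), fun h ↦ ?_⟩
  have hlast : k + n ≤ m := by
    let i : Fin n := ⟨n - 1, Nat.sub_one_lt_of_lt hn⟩
    have hi : i.val + 1 = n := Nat.sub_add_cancel hn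
    have := h i
    have := hlt i
    lia
  exact hasDepthGE_quotient_specializedFerrersIdeal hlam hmu hle hlam_le hlast h

theorem exists_isRegular_quotient_specializedFerrersIdeal_iff (hn : 0 < n) (hlam : Antitone lam)
    (hmu : Monotone mu) (hle : ∀ i : Fin n, i ≤ mu i) (hlt : ∀ i, mu i < lam i)
    (hlam_le : ∀ i, lam i ≤ m) :
    (∃ rs : List (MvPolynomial (Fin m) K), rs.length = k ∧ (∀ r ∈ rs, r ∈ idealOfVars (Fin m) K) ∧
        IsRegular (MvPolynomial (Fin m) K ⧸ specializedFerrersIdeal K hnm lam mu) rs) ↔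
      k ≤ m - ⨆ i, (lam i - mu i + i.val) := by
  have hrow (i : Fin n) : lam i - mu i + i ≤ m := by
    have := hle i
    have := hlt i
    have := hlam_le i
    lia
  have := Fin.pos_iff_nonempty.mp hn
  have htop := smul_top_quotient_lt_top
    (specializedFerrersIdeal_le_idealOfVars (R := K) (hnm := hnm) (lam := lam) (mu := mu))
    isPrime_idealOfVars.ne_top
  rw [← hasDepthGE_iff_exists_isRegular htop, le_sub_ciSup_iff hrow,
    hasDepthGE_quotient_specializedFerrersIdeal_iff hn hlam hmu hle hlt hlam_le]

end Ferrers

/-- Assume `μ_i ≥ i − 1` for all `i`, and set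
`d := m − max_{1≤j≤n} (λ_j − μ_j + j − 1)`. Then the depth of `S/Ī_{λ−μ}`
(`S = K[x_1,…,x_m]`) equals `d`: every list of elements of the irrelevant
maximal ideal `𝔪 = (x_1,…,x_m)` that is a regular sequence on `S/Ī_{λ−μ}` has
length at most `d`, and there exists such a regular sequence of length `d`.
Indices: `i : Fin n`/`j : Fin m` correspond to the 1-based indices `i.val+1`/`j.val+1`,
so the 1-based quantity `λ_j − μ_j + j − 1` reads `lam i - mu i + i.val`. -/
theorem specialized_ferrers_depth
    (K : Type*) [Field K] (n m : ℕ) (hn : 1 ≤ n) (hnm : n ≤ m)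
    (lam mu : Fin n → ℕ)
    (hlam_top : lam ⟨0, hn⟩ = m)
    (hlam_anti : Antitone lam)
    (hlam_pos : 1 ≤ lam ⟨n - 1, by omega⟩)
    (hmu_mono : Monotone mu)
    (hmu_lt : mu ⟨n - 1, by omega⟩ < lam ⟨n - 1, by omega⟩)
    (hmu_ge : ∀ i : Fin n, i.val ≤ mu i)
    (d : ℕ)
    (hd : d = m - sSup {h : ℕ | ∃ i : Fin n, h = lam i - mu i + i.val}) :
    (∀ rs : List (MvPolynomial (Fin m) K),
        (∀ r ∈ rs, r ∈ Ideal.span (Set.range (X : Fin m → MvPolynomial (Fin m) K))) →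
        RingTheory.Sequence.IsRegular
          (MvPolynomial (Fin m) K ⧸
            Ideal.span {p : MvPolynomial (Fin m) K |
              ∃ (i : Fin n) (j : Fin m), mu i ≤ j.val ∧ j.val < lam i ∧
                p = X (Fin.castLE hnm i) * X j}) rs →
        rs.length ≤ d) ∧
    (∃ rs : List (MvPolynomial (Fin m) K),
        (∀ r ∈ rs, r ∈ Ideal.span (Set.range (X : Fin m → MvPolynomial (Fin m) K))) ∧
        RingTheory.Sequence.IsRegular
          (MvPolynomial (Fin m) K ⧸
            Ideal.span {p : MvPolynomial (Fin m) K |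
              ∃ (i : Fin n) (j : Fin m), mu i ≤ j.val ∧ j.val < lam i ∧
                p = X (Fin.castLE hnm i) * X j}) rs ∧
        rs.length = d) := by
  have hlt (i : Fin n) : mu i < lam i :=
    have hi : i ≤ ⟨n - 1, by lia⟩ := Fin.mk_le_mk.mpr (by lia)
    (hmu_mono hi).trans_lt (hmu_lt.trans_le (hlam_anti hi))
  have hle (i : Fin n) : lam i ≤ m := hlam_top ▸ hlam_anti (Fin.mk_le_mk.mpr i.1.zero_le)
  obtain rfl : d = m - ⨆ i, (lam i - mu i + i.val) := by
    simp only [hd, iSup, Set.range, eq_comm]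
  have depth_iff (k : ℕ) := exists_isRegular_quotient_specializedFerrersIdeal_iff
    (K := K) (hnm := hnm) (k := k) hn hlam_anti hmu_mono hmu_ge hlt hle
  obtain ⟨rs, hlength, hmem, hreg⟩ := (depth_iff _).mpr le_rfl
  exact ⟨fun rs hmem hreg ↦ (depth_iff _).mp ⟨rs, rfl, hmem, hreg⟩, rs, hmem, hreg, hlength⟩
end
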